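/- For every permutation w of {1,…,n}, the following identity holds in ℤ[x₁,…,xₙ,y₁,…,yₙ]: the sum over all bumpless-reduced δ ∈ GPDs(w) of the product over all blank tiles at positions (i,j) of δ of (x_i − y_j) equals the sum over all classic pipe dreams γ ∈ GPDs(w₀ w w₀) of the product over all cross tiles at positions (i,j) of γ of (x_{n+1−i} − y_{n+1−j}), where w₀ is the longest permutation. (This expresses the agreement of the classic and bumpless pipe dream formulas for double Schubert polynomials.) -/

import Mathlib

open scoped Classical

namespace GPDpaper

/-- Raw data of a pipe-filling of the `n × n` grid: `d.1 i j` is the (optional) pipe label on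
the vertical edge at row `i`, West of column `j` (so `d.1 i 0` is on the West boundary and
`d.1 i (Fin.last n)` on the East boundary); `d.2 i j` is the label on the horizontal edge
North of row `i` in column `j` (so `d.2 0 j` is on the North boundary and
`d.2 (Fin.last n) j` on the South boundary).  Rows are numbered from the top. -/
abbrev Pipes (n : ℕ) :=
  (Fin n → Fin (n+1) → Option (Fin n)) × (Fin (n+1) → Fin n → Option (Fin n))

variable {n : ℕ}

/-- Label on the West edge of square `(i,j)`. -/
def We (d : Pipes n) (i j : Fin n) : Option (Fin n) := d.1 i j.castSucc
/-- Label on the East edge of square `(i,j)`. -/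
def Ea (d : Pipes n) (i j : Fin n) : Option (Fin n) := d.1 i j.succ
/-- Label on the North edge of square `(i,j)`. -/
def No (d : Pipes n) (i j : Fin n) : Option (Fin n) := d.2 i.castSucc j
/-- Label on the South edge of square `(i,j)`. -/
def So (d : Pipes n) (i j : Fin n) : Option (Fin n) := d.2 i.succ j

/-- The local condition making `d` a generic pipe dream: at each square, the pair of labels
leaving through the East and North edges is either `(W,S)` (cross/horizontal/vertical/blank
tile) or `(S,W)` (bump/elbow/blank tile); moreover two edges of the same square never carry
the same pipe label. -/
def IsValid (d : Pipes n) : Prop :=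
  ∀ i j : Fin n,
    ((Ea d i j, No d i j) = (We d i j, So d i j) ∨
     (Ea d i j, No d i j) = (So d i j, We d i j)) ∧
    (We d i j = So d i j → We d i j = none)

/-- The seven generic pipe dream tiles. -/
inductive Tile where
  | cross | bump | nw | se | horiz | vert | blank
deriving DecidableEq

/-- The tile of a pipe-filling at square `(i,j)`. -/
def tile (d : Pipes n) (i j : Fin n) : Tile :=
  match We d i j, So d i j with
  | some a, some _ => if Ea d i j = some a then .cross else .bump
  | some _, none => if No d i j = none then .horiz else .nw
  | none, some _ => if No d i j = none then .se else .vert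
  | none, none => .blank

/-- `d` is a generic pipe dream for the permutation `w`: it is locally valid, the pipe
entering the West boundary in row `i` is labelled `i`, no pipes meet the East and South
boundaries, and the pipe exiting the North boundary in column `j` is labelled `w⁻¹(j)`. -/
def IsGPDof (w : Equiv.Perm (Fin n)) (d : Pipes n) : Prop :=
  IsValid d ∧
  (∀ i : Fin n, d.1 i 0 = some i) ∧
  (∀ i : Fin n, d.1 i (Fin.last n) = none) ∧
  (∀ j : Fin n, d.2 (Fin.last n) j = none) ∧
  (∀ j : Fin n, d.2 0 j = some (w.symm j))

/-- Number of tiles of `d` of a given type. -/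
noncomputable def tileCount (d : Pipes n) (t : Tile) : ℕ :=
  (Finset.univ.filter (fun p : Fin n × Fin n => tile d p.1 p.2 = t)).card

/-- The pipes labelled `p` and `q` cross at the tile `(i,j)`. -/
def CrossesAt (d : Pipes n) (p q : Fin n) (i j : Fin n) : Prop :=
  tile d i j = .cross ∧
  ((We d i j = some p ∧ So d i j = some q) ∨ (We d i j = some q ∧ So d i j = some p))

/-- The number of tiles at which the pipes labelled `p` and `q` cross. -/
noncomputable def crossCount (d : Pipes n) (p q : Fin n) : ℕ :=
  (Finset.univ.filter (fun ij : Fin n × Fin n => CrossesAt d p q ij.1 ij.2)).card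

/-- No two pipes of `d` cross each other at more than one tile. -/
def NoDoubleCross (d : Pipes n) : Prop := ∀ p q : Fin n, crossCount d p q ≤ 1

/-- Number of inversions (Coxeter length) of a permutation. -/
def invCount (w : Equiv.Perm (Fin n)) : ℕ :=
  (Finset.univ.filter (fun p : Fin n × Fin n => p.1 < p.2 ∧ w p.2 < w p.1)).card

/-- Classic pipe dream (in 1-indexed terms: crosses and bumps for `i+j ≤ n`, NW-elbows on the
antidiagonal `i+j = n+1`, blanks below, and no two pipes crossing twice). -/
def IsClassic (d : Pipes n) : Prop :=
  (∀ i j : Fin n, (i : ℕ) + (j : ℕ) + 2 ≤ n → tile d i j = .cross ∨ tile d i j = .bump) ∧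
  (∀ i j : Fin n, (i : ℕ) + (j : ℕ) + 2 = n + 1 → tile d i j = .nw) ∧
  (∀ i j : Fin n, (i : ℕ) + (j : ℕ) + 2 > n + 1 → tile d i j = .blank) ∧
  NoDoubleCross d

/-- Bumpless-reduced: no bump tiles and no two pipes crossing twice. -/
def IsBumplessReduced (d : Pipes n) : Prop :=
  (∀ i j : Fin n, tile d i j ≠ .bump) ∧ NoDoubleCross d


/-- Variables `x₁,…,xₙ, y₁,…,yₙ`. -/
inductive XY (n : ℕ) where
  | x (i : Fin n) | y (j : Fin n)


section Model
variable {R : Type*} [CommRing R]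

def TV {X : Type*} [Fintype X] (A : ℕ → X → X → R) (v : X → R) : ℕ → ℕ → X → R
  | 0, _ => v
  | m+1, o => fun a => ∑ b, A o a b * TV A v m (o+1) b

theorem TV_path {X : Type*} [Fintype X] [DecidableEq X] (A : ℕ → X → X → R) (v : X → R) :
    ∀ (m o : ℕ) (a : X), TV A v m o a =
      ∑ u : Fin (m+1) → X, if u 0 = a then
        (∏ i : Fin m, A (o+i) (u i.castSucc) (u i.succ)) * v (u (Fin.last m)) else 0 := by
  intro m
  induction m with
  | zero =>
    intro o a
    rw [← (Equiv.funUnique (Fin 1) X).symm.sum_comp]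
    simp [TV, Equiv.funUnique]
  | succ m ih =>
    intro o a
    rw [← (Fin.consEquiv (fun _ : Fin (m+1+1) => X)).sum_comp, Fintype.sum_prod_type]
    simp only [TV, Fin.consEquiv, Equiv.coe_fn_mk, Fin.cons_zero]
    refine Eq.trans ?_ (Finset.sum_eq_single a ?_ ?_).symm
    · simp only [if_true]
      simp_rw [ih, Finset.mul_sum]
      rw [Finset.sum_comm]
      refine Finset.sum_congr rfl fun u _ => ?_
      rw [Finset.sum_eq_single (u 0)]
      · rw [if_pos rfl, Fin.prod_univ_succ]
        have h1 : (Fin.cons a u : Fin (m+1+1) → X) (Fin.last (m+1)) = u (Fin.last m) := by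
          rw [← Fin.succ_last, Fin.cons_succ]
        rw [h1]
        have : ∀ i : Fin m, (Fin.cons a u : Fin (m+1+1) → X) i.succ.castSucc = u i.castSucc := by
          intro i; rw [← Fin.succ_castSucc, Fin.cons_succ]
        simp only [this, Fin.cons_succ]
        simp only [mul_assoc, Fin.val_zero, add_zero, Fin.val_succ, Fin.castSucc_zero, Fin.cons_zero,
          show ∀ x : ℕ, o + 1 + x = o + (x + 1) by intro x; omega]
      · intro b _ hb; rw [if_neg (Ne.symm hb), mul_zero]
      · simp
    · intro b _ hb; simp [hb]
    · simp

theorem TV_congr {X : Type*} [Fintype X] (A B : ℕ → X → X → R) (v : X → R) :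
    ∀ (m o : ℕ), (∀ i, o ≤ i → i < o + m → A i = B i) → TV A v m o = TV B v m o := by
  intro m
  induction m with
  | zero => intros; rfl
  | succ m ih =>
    intro o h
    simp only [TV]
    rw [h o le_rfl (by omega), ih (o+1) (fun i h1 h2 => h i (by omega) (by omega))]

theorem TV_two {X : Type*} [Fintype X] (A B C : ℕ → X → X → R) (v : X → R) (r : ℕ) (c : R)
    (hB : ∀ i, i ≠ r → i ≠ r+1 → A i = B i) (hC : ∀ i, i ≠ r → i ≠ r+1 → A i = C i)
    (h2 : ∀ a b, ∑ m, A r a m * A (r+1) m b =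
      ∑ m, B r a m * B (r+1) m b + c * ∑ m, C r a m * C (r+1) m b) :
    ∀ (m o : ℕ), o ≤ r → r + 1 < o + m → ∀ a,
      TV A v m o a = TV B v m o a + c * TV C v m o a := by
  intro m
  induction m with
  | zero => intro o h1 h2; omega
  | succ m ih =>
    intro o ho hr a
    by_cases h : o = r
    · subst h
      obtain ⟨k, rfl⟩ : ∃ k, m = k + 1 := ⟨m-1, by omega⟩
      have e1 := TV_congr A B v k (o+1+1) (fun i _ _ => hB i (by omega) (by omega))
      have e2 := TV_congr A C v k (o+1+1) (fun i _ _ => hC i (by omega) (by omega))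
      simp only [TV]
      rw [← e1, ← e2]
      generalize TV A v k (o+1+1) = g
      have key : ∀ D : ℕ → X → X → R, ∑ b, D o a b * ∑ b', D (o+1) b b' * g b' =
          ∑ b', (∑ b, D o a b * D (o+1) b b') * g b' := by
        intro D
        simp_rw [Finset.mul_sum, Finset.sum_mul]
        rw [Finset.sum_comm]
        simp [mul_assoc]
      rw [key, key, key]
      rw [Finset.mul_sum, ← Finset.sum_add_distrib]
      refine Finset.sum_congr rfl fun b _ => ?_
      rw [h2]; ring
    · simp only [TV]
      simp_rw [ih (o+1) (by omega) (by omega), mul_add, Finset.sum_add_distrib, Finset.mul_sum]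
      rw [hB o h (by omega)]
      congr 1
      rw [← hB o h (by omega), hC o h (by omega)]
      refine Finset.sum_congr rfl fun b _ => by ring

variable {n : ℕ}

/-- Tile weight. -/
noncomputable def wt (s t : Option (Fin n) → Option (Fin n) → R) (W S E N : Option (Fin n)) : R :=
  (if E = W ∧ N = S then s W S else 0) + (if E = S ∧ N = W then t W S else 0)

/-- Column formula. -/
theorem wt_col (s t s' t' : Option (Fin n) → Option (Fin n) → R) (p q S N : Option (Fin n))
    (V : Option (Fin n) → Option (Fin n) → R) :
    ∑ e : Option (Fin n) × Option (Fin n), (∑ m, wt s t p m e.1 N * wt s' t' q S e.2 m) * V e.1 e.2 =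
      s' q S * ((if N = S then s p S * V p q else 0) + (if N = p then t p S * V S q else 0)) +
      t' q S * ((if N = q then s p q * V p S else 0) + (if N = p then t p q * V q S else 0)) := by
  have : ∀ e : Option (Fin n) × Option (Fin n), (∑ m, wt s t p m e.1 N * wt s' t' q S e.2 m) =
      (if e.2 = q then wt s t p S e.1 N * s' q S else 0) +
      (if e.2 = S then wt s t p q e.1 N * t' q S else 0) := by
    rintro ⟨e1, e2⟩
    rw [show wt s' t' = fun W S E N => (if E = W ∧ N = S then s' W S else 0) + (if E = S ∧ N = W then t' W S else 0) from rfl]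
    simp only [mul_add, Finset.sum_add_distrib]
    congr 1
    · by_cases h : e2 = q <;> simp [h]
    · by_cases h : e2 = S <;> simp [h]
  simp_rw [this, add_mul, Finset.sum_add_distrib, Fintype.sum_prod_type]
  have k : ∀ (z : Option (Fin n)) (c : R) (b : Option (Fin n)), ∑ e1 : Option (Fin n), ∑ e2 : Option (Fin n), (if e2 = z then wt s t p b e1 N * c else 0) * V e1 e2
     = c * ((if N = b then s p b * V p z else 0) + (if N = p then t p b * V b z else 0)) := by
    intro z c b
    simp only [ite_mul, zero_mul, Finset.sum_ite_eq', Finset.mem_univ, if_true]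
    simp only [wt, add_mul, Finset.sum_add_distrib, mul_add]
    congr 1
    · by_cases h : N = b <;> simp [h] ; ring
    · by_cases h : N = p <;> simp [h] ; ring
  rw [k, k]

def gtI (R : Type*) [CommRing R] : Option (Fin n) → Option (Fin n) → R
  | none, _ => 0
  | some _, none => 1
  | some a, some b => if b < a then 1 else 0

/-- Bumpless weights. -/
noncomputable def sB (u : R) : Option (Fin n) → Option (Fin n) → R
  | none, none => u
  | some _, none => 1
  | none, some _ => 1
  | some a, some b => if b < a then 1 else 0

noncomputable def tB : Option (Fin n) → Option (Fin n) → R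
  | none, none => 0
  | some _, none => 1
  | none, some _ => 1
  | some _, some _ => 0

/-- classic -/
noncomputable def sP (u : R) : Option (Fin n) → Option (Fin n) → R
  | some a, some b => if b < a then u else 0
  | _, _ => 0

noncomputable def tP : Option (Fin n) → Option (Fin n) → R
  | some _, some _ => 1
  | _, _ => 0

/-- YBE for bumpless -/
theorem ybeB (x x' y : R) (S N : Option (Fin n)) (V V' : Option (Fin n) → Option (Fin n) → R)
    (hV : ∀ p q, V' p q = V p q + gtI R p q * (x - x') * V q p)
    (F : R → R → (Option (Fin n) → Option (Fin n) → R) → Option (Fin n) → Option (Fin n) → R)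
    (hF : ∀ x x' V p q, F x x' V p q =  sB (x'-y) q S * ((if N = S then sB (x-y) p S * V p q else 0) + (if N = p then tB p S * V S q else 0)) +
      tB q S * ((if N = q then sB (x-y) p q * V p S else 0) + (if N = p then tB p q * V q S else 0))) (p q) :
    F x' x V' p q = F x x' V p q + gtI R p q * (x - x') * F x x' V q p := by
  simp only [hF, hV]
  rcases p with _ | p <;> rcases q with _ | q <;> rcases S with _ | S <;> simp only [sB, tB, gtI] <;>
  rcases N with _ | N <;> simp only [reduceCtorEq, Option.some.injEq, if_true, if_false] <;>
  first | ring1 | (split_ifs <;> first | ring1 | (exfalso; omega))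

theorem ybeP (x x' y : R) (S N : Option (Fin n)) (V V' : Option (Fin n) → Option (Fin n) → R)
    (hV : ∀ p q, V' p q = V p q + gtI R p q * (x' - x) * V q p)
    (F : R → R → (Option (Fin n) → Option (Fin n) → R) → Option (Fin n) → Option (Fin n) → R)
    (hF : ∀ x x' V p q, F x x' V p q =  sP (x'-y) q S * ((if N = S then sP (x-y) p S * V p q else 0) + (if N = p then tP p S * V S q else 0)) +
      tP q S * ((if N = q then sP (x-y) p q * V p S else 0) + (if N = p then tP p q * V q S else 0))) (p q) :
    F x' x V' p q = F x x' V p q + gtI R p q * (x' - x) * F x x' V q p := by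
  simp only [hF, hV]
  rcases p with _ | p <;> rcases q with _ | q <;> rcases S with _ | S <;> simp only [sP, tP, gtI] <;>
  rcases N with _ | N <;> simp only [reduceCtorEq, Option.some.injEq, if_true, if_false] <;>
  first | ring1 | (split_ifs <;> first | ring1 | (exfalso; omega))

def ext (u : Fin n → Option (Fin n)) (j : ℕ) : Option (Fin n) :=
  if h : j < n then u ⟨j, h⟩ else none

noncomputable def Row (s t : ℕ → Option (Fin n) → Option (Fin n) → R) (a : Option (Fin n))
    (N S : Fin n → Option (Fin n)) : R :=
  TV (fun j e e' => wt (s j) (t j) e (ext S j) e' (ext N j))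
    (fun e => if e = none then 1 else 0) n 0 a

theorem Row_eq (s t : ℕ → Option (Fin n) → Option (Fin n) → R) (a : Option (Fin n))
    (N S : Fin n → Option (Fin n)) :
    Row s t a N S = ∑ h : Fin (n+1) → Option (Fin n),
      (if h 0 = a ∧ h (Fin.last n) = none then
        ∏ j : Fin n, wt (s j) (t j) (h j.castSucc) (S j) (h j.succ) (N j) else 0) := by
  rw [Row, TV_path]
  refine Finset.sum_congr rfl fun h _ => ?_
  by_cases h1 : h 0 = a <;> by_cases h2 : h (Fin.last n) = none <;> simp [h1, h2, ext]

noncomputable def Two (s t s' t' : ℕ → Option (Fin n) → Option (Fin n) → R)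
    (N S : Fin n → Option (Fin n)) : ℕ → ℕ → Option (Fin n) × Option (Fin n) → R :=
  TV (fun j (e e' : Option (Fin n) × Option (Fin n)) =>
      ∑ m, wt (s j) (t j) e.1 m e'.1 (ext N j) * wt (s' j) (t' j) e.2 (ext S j) e'.2 m)
    (fun e => if e = (none, none) then 1 else 0)

theorem two_eq (s t s' t' : ℕ → Option (Fin n) → Option (Fin n) → R)
    (N S : Fin n → Option (Fin n)) (p q : Option (Fin n)) :
    ∑ m, Row s t p N m * Row s' t' q m S = Two s t s' t' N S n 0 (p, q) := by
  rw [Two, TV_path, ← (Equiv.arrowProdEquivProdArrow _ _ _).symm.sum_comp, Fintype.sum_prod_type]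
  simp_rw [Row_eq, Finset.sum_mul_sum]
  rw [Finset.sum_comm]
  refine Finset.sum_congr rfl fun h _ => ?_
  rw [Finset.sum_comm]
  refine Finset.sum_congr rfl fun h' _ => ?_
  simp only [Equiv.arrowProdEquivProdArrow, Equiv.coe_fn_symm_mk, Prod.mk.injEq]
  by_cases h1 : h 0 = p <;> by_cases h2 : h (Fin.last n) = none <;>
  by_cases h3 : h' 0 = q <;> by_cases h4 : h' (Fin.last n) = none <;>
  simp only [h1, h2, h3, h4, and_true, and_false, true_and, false_and, if_true, if_false, mul_zero, zero_mul,
    mul_one, Finset.sum_const_zero, reduceCtorEq]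
  rw [Fintype.prod_sum]
  refine Finset.sum_congr rfl fun m _ => ?_
  rw [← Finset.prod_mul_distrib]
  simp [ext]

theorem Two_zero (s t s' t' : ℕ → Option (Fin n) → Option (Fin n) → R)
    (N S : Fin n → Option (Fin n)) (o : ℕ) (e) :
    Two s t s' t' N S 0 o e = if e = (none, none) then 1 else 0 := rfl

theorem Two_succ (s t s' t' : ℕ → Option (Fin n) → Option (Fin n) → R)
    (N S : Fin n → Option (Fin n)) (m o : ℕ) (p q : Option (Fin n)) :
    Two s t s' t' N S (m+1) o (p, q) =
      s' o q (ext S o) * ((if ext N o = ext S o then s o p (ext S o) * Two s t s' t' N S m (o+1) (p, q) else 0)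
        + (if ext N o = p then t o p (ext S o) * Two s t s' t' N S m (o+1) (ext S o, q) else 0)) +
      t' o q (ext S o) * ((if ext N o = q then s o p q * Two s t s' t' N S m (o+1) (p, ext S o) else 0)
        + (if ext N o = p then t o p q * Two s t s' t' N S m (o+1) (q, ext S o) else 0)) := by
  rw [← wt_col (s o) (t o) (s' o) (t' o) p q (ext S o) (ext N o)
    (fun a b => Two s t s' t' N S m (o+1) (a, b))]
  rfl

theorem two_B (x x' : R) (y : ℕ → R) (N S : Fin n → Option (Fin n)) : ∀ m o p q,
    Two (fun j => sB (x' - y j)) (fun _ => tB) (fun j => sB (x - y j)) (fun _ => tB) N S m o (p, q) =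
    Two (fun j => sB (x - y j)) (fun _ => tB) (fun j => sB (x' - y j)) (fun _ => tB) N S m o (p, q) +
    gtI R p q * (x - x') *
      Two (fun j => sB (x - y j)) (fun _ => tB) (fun j => sB (x' - y j)) (fun _ => tB) N S m o (q, p) := by
  intro m
  induction m with
  | zero =>
    intro o p q
    simp only [Two_zero]
    rcases p with _ | p <;> rcases q with _ | q <;> simp [gtI]
  | succ m ih =>
    intro o p q
    have := ybeB x x' (y o) (ext S o) (ext N o) _ _ (ih (o+1)) _ (fun _ _ _ _ _ => rfl) p q
    simp only [Two_succ]
    exact this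

noncomputable def sPP (i j : ℕ) (u : R) : Option (Fin n) → Option (Fin n) → R :=
  if i + j + 2 ≤ n then sP u else if i + j + 2 = n + 1 then fun _ _ => 0 else
    fun a b => if a = none ∧ b = none then 1 else 0

noncomputable def tPP (i j : ℕ) : Option (Fin n) → Option (Fin n) → R :=
  if i + j + 2 ≤ n then tP else if i + j + 2 = n + 1 then
    fun a b => if a ≠ none ∧ b = none then 1 else 0 else fun _ _ => 0

theorem two_P (r : ℕ) (x x' : R) (y : ℕ → R) (N S : Fin n → Option (Fin n))
    (A A' : ℕ → ℕ → Option (Fin n) × Option (Fin n) → R)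
    (hA : A = Two (fun j => sPP r j (x - y j)) (fun j => tPP r j)
      (fun j => sPP (r+1) j (x' - y j)) (fun j => tPP (r+1) j) N S)
    (hA' : A' = Two (fun j => sPP r j (x' - y j)) (fun j => tPP r j)
      (fun j => sPP (r+1) j (x - y j)) (fun j => tPP (r+1) j) N S) : ∀ m o, o + m = n →
    (n ≤ o + r + 1 → A' m o = A m o) ∧
    (o + r + 2 ≤ n → ∀ p q, A' m o (p, q) = A m o (p, q) + gtI R p q * (x' - x) * A m o (q, p)) := by
  have e1 := fun m o p q => Two_succ (fun j => sPP r j (x - y j)) (fun j => tPP r j)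
      (fun j => sPP (r+1) j (x' - y j)) (fun j => tPP (r+1) j) N S m o p q
  have e2 := fun m o p q => Two_succ (fun j => sPP r j (x' - y j)) (fun j => tPP r j)
      (fun j => sPP (r+1) j (x - y j)) (fun j => tPP (r+1) j) N S m o p q
  simp only [← hA, ← hA'] at e1 e2
  intro m
  induction m with
  | zero =>
    intro o ho
    subst hA hA'
    refine ⟨fun _ => rfl, fun h => by omega⟩
  | succ m ih =>
    intro o ho
    obtain ⟨i1, i2⟩ := ih (o+1) (by omega)
    refine ⟨fun h => ?_, fun h => ?_⟩
    · funext ⟨p, q⟩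
      rw [e1, e2, i1 (by omega)]
      have c1 : ¬ (r + o + 2 ≤ n) := by omega
      have c2 : ¬ (r + 1 + o + 2 ≤ n) := by omega
      simp only [sPP, tPP, if_neg c1, if_neg c2]
    · intro p q
      by_cases h' : o + r + 2 = n
      · rw [e1, e2, e1, i1 (by omega)]
        have c1 : (r + o + 2 ≤ n) := by omega
        have c2 : ¬ (r + 1 + o + 2 ≤ n) := by omega
        have c3 : (r + 1 + o + 2 = n + 1) := by omega
        simp only [sPP, tPP, if_pos c1, if_neg c2, if_pos c3]
        generalize ext S o = S
        generalize ext N o = N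
        generalize A m (o+1) = V
        rcases p with _ | p <;> rcases q with _ | q <;> rcases S with _ | S <;> simp only [sP, tP, gtI] <;>
        rcases N with _ | N <;> simp <;>
        first | ring1 | (split_ifs <;> first | ring1 | (exfalso; omega))
      · have := ybeP x x' (y o) (ext S o) (ext N o) _ _ (i2 (by omega)) _ (fun _ _ _ _ _ => rfl) p q
        have c1 : (r + o + 2 ≤ n) := by omega
        have c2 : (r + 1 + o + 2 ≤ n) := by omega
        rw [e1, e2, e1]
        simp only [sPP, tPP, if_pos c1, if_pos c2]
        exact this

noncomputable def Z (s t : ℕ → ℕ → Option (Fin n) → Option (Fin n) → R) (lam : ℕ → Option (Fin n)) : R :=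
  TV (fun i (N S : Fin n → Option (Fin n)) => Row (s i) (t i) (lam i) N S)
    (fun u => if u = fun _ => none then 1 else 0) n 0 (fun j => some j)

def Bdry (lam : ℕ → Option (Fin n)) (d : Pipes n) : Prop :=
  (∀ i : Fin n, d.1 i 0 = lam i) ∧
  (∀ i : Fin n, d.1 i (Fin.last n) = none) ∧
  (∀ j : Fin n, d.2 (Fin.last n) j = none) ∧
  (∀ j : Fin n, d.2 0 j = some j)

theorem Z_eq (s t : ℕ → ℕ → Option (Fin n) → Option (Fin n) → R) (lam : ℕ → Option (Fin n)) :
    Z s t lam = ∑ d : Pipes n, if Bdry lam d then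
      ∏ i : Fin n, ∏ j : Fin n, wt (s i j) (t i j) (We d i j) (So d i j) (Ea d i j) (No d i j) else 0 := by
  rw [Z, TV_path, Fintype.sum_prod_type, Finset.sum_comm]
  refine Finset.sum_congr rfl fun u _ => ?_
  simp_rw [Row_eq, Fintype.prod_sum, Finset.prod_ite_zero]
  by_cases h1 : u 0 = fun j => some j
  · by_cases h2 : u (Fin.last n) = fun _ => none
    · simp only [h1, h2, if_true, mul_one]
      refine Finset.sum_congr rfl fun h _ => ?_
      have e : (∀ i ∈ Finset.univ, h i 0 = lam (0 + (i : ℕ)) ∧ h i (Fin.last n) = none) ↔ Bdry lam (h, u) := by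
        simp only [Bdry, h1, h2, Finset.mem_univ, true_imp_iff, zero_add, implies_true, and_true, forall_and]
      by_cases hB : Bdry lam (h, u)
      · rw [if_pos hB, if_pos (e.2 hB)]
        simp only [zero_add]
        rfl
      · rw [if_neg hB, if_neg (mt e.1 hB)]
    · have : ∀ h, ¬ Bdry lam (h, u) := fun h hb => h2 (funext hb.2.2.1)
      simp [h2, this]
  · have : ∀ h, ¬ Bdry lam (h, u) := fun h hb => h1 (funext hb.2.2.2)
    simp [h1, this]

noncomputable def ZB (lam : ℕ → Option (Fin n)) (x y : ℕ → R) : R :=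
  Z (fun i j => sB (x i - y j)) (fun _ _ => tB) lam

noncomputable def ZP (lam : ℕ → Option (Fin n)) (x y : ℕ → R) : R :=
  Z (fun i j => sPP i j (x i - y j)) (fun i j => tPP i j) lam

theorem swap_off {r i : ℕ} (h1 : i ≠ r) (h2 : i ≠ r+1) : Equiv.swap r (r+1) i = i :=
  Equiv.swap_apply_of_ne_of_ne h1 h2

theorem ZB_rel (lam : ℕ → Option (Fin n)) (x y : ℕ → R) (r : ℕ) (hr : r + 1 < n) :
    ZB lam (x ∘ Equiv.swap r (r+1)) y = ZB lam x y +
      gtI R (lam r) (lam (r+1)) * (x r - x (r+1)) * ZB (lam ∘ Equiv.swap r (r+1)) x y := by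
  rw [ZB, ZB, ZB, Z, Z, Z]
  apply TV_two (r := r) (o := 0) (m := n)
  · intro i h1 h2
    simp only [Function.comp, swap_off h1 h2]
  · intro i h1 h2
    simp only [Function.comp, swap_off h1 h2]
  · intro N S
    simp only [Function.comp, Equiv.swap_apply_left, Equiv.swap_apply_right]
    rw [two_eq, two_eq, two_eq]
    exact two_B (x r) (x (r+1)) y N S n 0 _ _
  · omega
  · omega

theorem ZP_rel (lam : ℕ → Option (Fin n)) (x y : ℕ → R) (r : ℕ) (hr : r + 1 < n) :
    ZP lam (x ∘ Equiv.swap r (r+1)) y = ZP lam x y +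
      gtI R (lam r) (lam (r+1)) * (x (r+1) - x r) * ZP (lam ∘ Equiv.swap r (r+1)) x y := by
  rw [ZP, ZP, ZP, Z, Z, Z]
  apply TV_two (r := r) (o := 0) (m := n)
  · intro i h1 h2
    simp only [Function.comp, swap_off h1 h2]
  · intro i h1 h2
    simp only [Function.comp, swap_off h1 h2]
  · intro N S
    simp only [Function.comp, Equiv.swap_apply_left, Equiv.swap_apply_right]
    rw [two_eq, two_eq, two_eq]
    exact (two_P r (x r) (x (r+1)) y N S _ _ rfl rfl n 0 (by omega)).2 (by omega) _ _
  · omega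
  · omega

section Topo
variable {n : ℕ}

def WV (d : Pipes n) : Prop := ∀ i j : Fin n,
    ((Ea d i j, No d i j) = (We d i j, So d i j) ∨
     (Ea d i j, No d i j) = (So d i j, We d i j))

def BdW (w : Equiv.Perm (Fin n)) (d : Pipes n) : Prop :=
  (∀ i : Fin n, d.1 i 0 = some i) ∧
  (∀ i : Fin n, d.1 i (Fin.last n) = none) ∧
  (∀ j : Fin n, d.2 (Fin.last n) j = none) ∧
  (∀ j : Fin n, d.2 0 j = some (w.symm j))

noncomputable def inL (n : ℕ) (k : ℤ) : Option (Fin n) :=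
  if h : 0 ≤ k ∧ k < n then some ⟨k.toNat, by omega⟩ else none

noncomputable def outL (w : Equiv.Perm (Fin n)) (k : ℤ) : Option (Fin n) :=
  (inL n k).map w.symm

noncomputable def HH (w : Equiv.Perm (Fin n)) (d : Pipes n) (i j : ℤ) : Option (Fin n) :=
  if i < 0 then outL w (i+j) else if j < 0 then inL n (i+j) else
  if h : 0 ≤ i ∧ 0 ≤ j ∧ i < n ∧ j ≤ n then d.1 ⟨i.toNat, by omega⟩ ⟨j.toNat, by omega⟩ else none

noncomputable def UU (w : Equiv.Perm (Fin n)) (d : Pipes n) (i j : ℤ) : Option (Fin n) :=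
  if i < 0 then outL w (i+j) else if j < 0 then inL n (i+j) else
  if h : 0 ≤ i ∧ 0 ≤ j ∧ i ≤ n ∧ j < n then d.2 ⟨i.toNat, by omega⟩ ⟨j.toNat, by omega⟩ else none

theorem inL_none {k : ℤ} (h : ¬ (0 ≤ k ∧ k < n)) : inL n k = none := dif_neg h
theorem outL_none {w : Equiv.Perm (Fin n)} {k : ℤ} (h : ¬ (0 ≤ k ∧ k < n)) : outL w k = none := by
  rw [outL, inL_none h]; rfl

variable {w : Equiv.Perm (Fin n)} {d : Pipes n}

theorem HH_in (i j : Fin n) : HH w d i j = We d i j := by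
  rw [HH, if_neg (by omega), if_neg (by omega), dif_pos (by omega)]
  rfl
theorem HH_in' (i j : Fin n) : HH w d i (j+1) = Ea d i j := by
  rw [HH, if_neg (by omega), if_neg (by omega), dif_pos (by omega)]
  simp only [Ea]; congr 1
theorem UU_in (i j : Fin n) : UU w d i j = No d i j := by
  rw [UU, if_neg (by omega), if_neg (by omega), dif_pos (by omega)]
  rfl
theorem UU_in' (i j : Fin n) : UU w d (i+1) j = So d i j := by
  rw [UU, if_neg (by omega), if_neg (by omega), dif_pos (by omega)]
  simp only [So]; congr 1

theorem HH_west (hb : BdW w d) (i : ℤ) (hi : 0 ≤ i) : HH w d i 0 = inL n i := by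
  rw [HH, if_neg (by omega), if_neg (by omega)]
  split_ifs with h
  · rw [inL, dif_pos (by omega)]
    exact hb.1 ⟨i.toNat, by omega⟩
  · rw [inL_none (by omega)]

theorem HH_east (hb : BdW w d) (i j : ℤ) (hi : 0 ≤ i) (hj : n ≤ j) : HH w d i j = none := by
  rw [HH, if_neg (by omega), if_neg (by omega)]
  split_ifs with h
  · obtain rfl : j = n := by omega
    exact hb.2.1 ⟨i.toNat, by omega⟩
  · rfl

theorem UU_south (hb : BdW w d) (i j : ℤ) (hi : n ≤ i) (hj : 0 ≤ j) : UU w d i j = none := by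
  rw [UU, if_neg (by omega), if_neg (by omega)]
  split_ifs with h
  · obtain rfl : i = n := by omega
    exact hb.2.2.1 ⟨j.toNat, by omega⟩
  · rfl

theorem UU_north (hb : BdW w d) (j : ℤ) : UU w d 0 j = outL w j := by
  rw [UU, if_neg (by omega), zero_add]
  split_ifs with h h'
  · rw [inL_none (by omega), outL_none (by omega)]
  · rw [outL, inL, dif_pos (by omega)]
    exact hb.2.2.2 ⟨j.toNat, by omega⟩
  · rw [outL_none (by omega)]

theorem out_turn (hb : BdW w d) (i j : ℤ) (h : ¬ (0 ≤ i ∧ i < n ∧ 0 ≤ j ∧ j < n)) :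
    HH w d i (j+1) = UU w d (i+1) j ∧ UU w d i j = HH w d i j := by
  by_cases hi : i < 0
  · have e : HH w d i (j+1) = outL w (i+(j+1)) := by rw [HH, if_pos hi]
    have e2 : UU w d i j = HH w d i j := by rw [HH, UU, if_pos hi, if_pos hi]
    refine ⟨?_, e2⟩
    rw [e]
    by_cases h1 : i = -1
    · subst h1
      rw [show (-1 : ℤ) + 1 = 0 by norm_num, UU_north hb]; congr 1; ring
    · rw [UU, if_pos (by omega)]; congr 1; ring
  · by_cases hj : j < 0
    · constructor
      · have : UU w d (i+1) j = inL n (i+1+j) := by rw [UU, if_neg (by omega), if_pos hj]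
        rw [this]
        by_cases h1 : j = -1
        · subst h1
          rw [show (-1 : ℤ) + 1 = 0 by norm_num, HH_west hb _ (by omega)]; congr 1; ring
        · rw [HH, if_neg hi, if_pos (by omega)]; congr 1; ring
      · rw [HH, UU, if_neg hi, if_neg hi, if_pos hj, if_pos hj]
    · by_cases hn : n ≤ j
      · rw [HH_east hb _ _ (by omega) (by omega), HH_east hb _ _ (by omega) (by omega)]
        constructor
        · rw [UU, if_neg (by omega), if_neg (by omega), dif_neg (by omega)]
        · rw [UU, if_neg (by omega), if_neg (by omega), dif_neg (by omega)]
      · rw [UU_south hb _ _ (by omega) (by omega), UU_south hb _ _ (by omega) (by omega)]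
        constructor
        · rw [HH, if_neg (by omega), if_neg (by omega), dif_neg (by omega)]
        · rw [HH, if_neg (by omega), if_neg (by omega), dif_neg (by omega)]

theorem all_turn (hv : WV d) (hb : BdW w d) (i j : ℤ) :
    (HH w d i (j+1) = HH w d i j ∧ UU w d i j = UU w d (i+1) j) ∨
    (HH w d i (j+1) = UU w d (i+1) j ∧ UU w d i j = HH w d i j) := by
  by_cases h : (0 ≤ i ∧ i < n ∧ 0 ≤ j ∧ j < n)
  · obtain ⟨i, rfl⟩ : ∃ i' : Fin n, i = i' := ⟨⟨i.toNat, by omega⟩, by simp; omega⟩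
    obtain ⟨j, rfl⟩ : ∃ i' : Fin n, j = i' := ⟨⟨j.toNat, by omega⟩, by simp; omega⟩
    rw [HH_in, HH_in', UU_in, UU_in']
    simpa using hv i j
  · exact Or.inr (out_turn hb i j h)

noncomputable def ff (w : Equiv.Perm (Fin n)) (d : Pipes n) (t k : ℤ) : Option (Fin n) :=
  if (k - t) % 2 = 0 then HH w d ((k-t)/2) ((k+t)/2) else UU w d ((k-t+1)/2) ((k+t-1)/2)

theorem ff_W (i j : ℤ) : ff w d (j-i) (i+j) = HH w d i j := by
  rw [ff, if_pos (by omega)]; congr 1 <;> omega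
theorem ff_S (i j : ℤ) : ff w d (j-i) (i+j+1) = UU w d (i+1) j := by
  rw [ff, if_neg (by omega)]; congr 1 <;> omega
theorem ff_N (i j : ℤ) : ff w d (j-i+1) (i+j) = UU w d i j := by
  rw [ff, if_neg (by omega)]; congr 1 <;> omega
theorem ff_E (i j : ℤ) : ff w d (j-i+1) (i+j+1) = HH w d i (j+1) := by
  rw [ff, if_pos (by omega)]; congr 1 <;> omega

theorem ff_turn (hv : WV d) (hb : BdW w d) (t k : ℤ) (h : (k-t) % 2 = 0) :
    (ff w d (t+1) (k+1) = ff w d t k ∧ ff w d (t+1) k = ff w d t (k+1)) ∨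
    (ff w d (t+1) (k+1) = ff w d t (k+1) ∧ ff w d (t+1) k = ff w d t k) := by
  obtain ⟨i, j, rfl, rfl⟩ : ∃ i j : ℤ, t = j - i ∧ k = i + j := ⟨(k-t)/2, (k+t)/2, by omega, by omega⟩
  rw [ff_W, ff_S, ff_N, ff_E]
  exact all_turn hv hb i j

/-- A swap occurs at time `t` between keys `k, k+1`. -/
def XX (w : Equiv.Perm (Fin n)) (d : Pipes n) (t k : ℤ) : Prop :=
  (k - t) % 2 = 0 ∧ ff w d (t+1) (k+1) = ff w d t k ∧ ff w d (t+1) k = ff w d t (k+1) ∧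
    ff w d t k ≠ ff w d t (k+1)

noncomputable def sig (w : Equiv.Perm (Fin n)) (d : Pipes n) (t k : ℤ) : ℤ :=
  if XX w d t k then k + 1 else if XX w d t (k-1) then k - 1 else k

theorem sig_sig (t k : ℤ) : sig w d t (sig w d t k) = k := by
  have key : ∀ k, XX w d t k → ¬ XX w d t (k+1) := fun k h h' => by
    have h1 := h.1; have h2 := h'.1; omega
  unfold sig
  by_cases h1 : XX w d t k
  · simp [h1, key k h1]
  · by_cases h2 : XX w d t (k-1)
    · simp [h1, h2]
    · simp [h1, h2]

theorem ff_sig (hv : WV d) (hb : BdW w d) (t k : ℤ) : ff w d (t+1) (sig w d t k) = ff w d t k := by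
  unfold sig
  split_ifs with h1 h2
  · exact h1.2.1
  · have := h2.2.2.1; simpa using this
  · by_cases hp : (k-t) % 2 = 0
    · rcases ff_turn hv hb t k hp with h | h
      · by_cases he : ff w d t k = ff w d t (k+1)
        · rw [h.2, he]
        · exact absurd ⟨hp, h.1, h.2, he⟩ h1
      · exact h.2
    · have hp' : (k-1-t) % 2 = 0 := by omega
      have := ff_turn hv hb t (k-1) hp'
      simp only [sub_add_cancel] at this
      rcases this with h | h
      · by_cases he : ff w d t (k-1) = ff w d t k
        · rw [h.1, he]
        · refine absurd ⟨hp', ?_, ?_, ?_⟩ h2 <;> simp only [sub_add_cancel]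
          exacts [h.1, h.2, he]
      · exact h.1

noncomputable def pos (w : Equiv.Perm (Fin n)) (d : Pipes n) (a : Fin n) : ℕ → ℤ
  | 0 => a
  | m+1 => sig w d (m - n) (pos w d a m)

theorem ff_start (hb : BdW w d) (k : ℤ) : ff w d (-n) k = inL n k := by
  unfold ff
  split_ifs with h
  · unfold HH
    split_ifs with h1 h2 h3
    · rw [outL_none (by omega), inL_none (by omega)]
    · congr 1; omega
    · omega
    · rw [inL_none (by omega)]
  · by_cases h4 : 0 ≤ (k+ -n-1)/2
    · rw [UU_south hb _ _ (by omega) h4, inL_none (by omega)]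
    · unfold UU
      split_ifs with h1 h2 h3
      · rw [outL_none (by omega), inL_none (by omega)]
      · congr 1; omega
      · omega
      · omega

theorem ff_end (hb : BdW w d) (k : ℤ) : ff w d n k = outL w k := by
  unfold ff
  split_ifs with h
  · by_cases h4 : 0 ≤ (k-n)/2
    · rw [HH_east hb _ _ h4 (by omega), outL_none (by omega)]
    · rw [HH, if_pos (by omega)]; congr 1; omega
  · by_cases h0 : (k - n + 1)/2 = 0
    · rw [h0, UU_north hb]; congr 1; omega
    · unfold UU
      split_ifs with h1 h2 h3
      · congr 1; omega
      · omega
      · omega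
      · rw [outL_none (by omega)]

theorem pos_iff (hv : WV d) (hb : BdW w d) (a : Fin n) : ∀ (m : ℕ) (k : ℤ),
    ff w d (m - n) k = some a ↔ k = pos w d a m := by
  intro m
  induction m with
  | zero =>
    intro k
    rw [show ((0:ℕ):ℤ) - n = -n by simp, ff_start hb, pos, inL]
    split_ifs with h
    · rw [Option.some.injEq, Fin.ext_iff]; simp only; omega
    · simp only [reduceCtorEq, false_iff]; omega
  | succ m ih =>
    intro k
    have e : ((m+1 : ℕ) : ℤ) - n = (m - n) + 1 := by push_cast; ring
    rw [e, pos]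
    have : ff w d (m - n + 1) k = ff w d (m-n) (sig w d (m-n) k) := by
      rw [← ff_sig hv hb (m-n) (sig w d (m-n) k), sig_sig]
    rw [this, ih]
    constructor
    · intro h; rw [← h, sig_sig]
    · intro h; rw [h, sig_sig]

theorem pos_end (hv : WV d) (hb : BdW w d) (a : Fin n) : pos w d a (2*n) = w a := by
  symm
  rw [← pos_iff hv hb, show ((2*n : ℕ) : ℤ) - n = n by push_cast; ring, ff_end hb, outL, inL,
    dif_pos (by omega)]
  simp

theorem pos_ne (hv : WV d) (hb : BdW w d) {a b : Fin n} (hab : a ≠ b) (m : ℕ) :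
    pos w d a m ≠ pos w d b m := by
  intro h
  have h1 := (pos_iff hv hb a m _).2 rfl
  have h2 := (pos_iff hv hb b m _).2 rfl
  rw [h, h2] at h1
  exact hab (Option.some.inj h1).symm

/-- pipes a (at west) and b (south) swap at time m -/
def CW (w : Equiv.Perm (Fin n)) (d : Pipes n) (a b : Fin n) (m : ℕ) : Prop :=
  XX w d (m - n) (pos w d a m) ∧ pos w d b m = pos w d a m + 1

theorem lt_step (hv : WV d) (hb : BdW w d) {a b : Fin n} (hab : a ≠ b) (m : ℕ)
    (h : pos w d a m < pos w d b m) (hc : ¬ CW w d a b m) :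
    pos w d a (m+1) < pos w d b (m+1) := by
  simp only [pos]
  have h1 : sig w d (m-n) (pos w d a m) ≠ sig w d (m-n) (pos w d b m) := by
    intro e
    have := congrArg (sig w d (m-n)) e
    rw [sig_sig, sig_sig] at this
    omega
  simp only [CW, not_and] at hc
  generalize pos w d a m = k at *
  generalize pos w d b m = l at *
  have b1 : sig w d (m-n) k ≤ k + 1 := by unfold sig; split_ifs <;> omega
  have b2 : l - 1 ≤ sig w d (m-n) l := by unfold sig; split_ifs <;> omega
  by_cases hl : l = k + 1
  · subst hl
    have hX : ¬ XX w d (m-n) k := fun hh => hc hh rfl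
    have c1 : sig w d (m-n) k ≤ k := by unfold sig; rw [if_neg hX]; split_ifs <;> omega
    have c2 : k + 1 ≤ sig w d (m-n) (k+1) := by
      have hX' : ¬ XX w d (m-n) (k+1-1) := by simpa using hX
      unfold sig; rw [if_neg hX']; split_ifs <;> omega
    omega
  · omega

theorem CW_flip {a b : Fin n} (m : ℕ) (hc : CW w d a b m) :
    pos w d b (m+1) < pos w d a (m+1) := by
  obtain ⟨h1, h2⟩ := hc
  simp only [pos]
  rw [h2]
  have h3 : ¬ XX w d (m-n) (pos w d a m + 1) := fun h => by
    have e1 := h.1; have e2 := h1.1; omega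
  have h4 : XX w d (m-n) (pos w d a m + 1 - 1) := by simpa using h1
  rw [sig, if_neg h3, if_pos h4, sig, if_pos h1]; omega

theorem distinct (hv : WV d) (hb : BdW w d) (i j : Fin n) (h : We d i j = So d i j) :
    We d i j = none := by
  by_contra hne
  obtain ⟨a, ha⟩ := Option.ne_none_iff_exists'.1 hne
  have e : ((j + n - i : ℕ) : ℤ) - n = (j:ℤ) - i := by omega
  have h1 : ff w d ((j + n - i : ℕ) - n) (i + j) = some a := by rw [e, ff_W, HH_in, ha]
  have h2 : ff w d ((j + n - i : ℕ) - n) (i + j + 1) = some a := by rw [e, ff_S, UU_in', ← h, ha]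
  rw [pos_iff hv hb] at h1 h2
  omega

theorem cross_iff (hv : WV d) (hb : BdW w d) (i j a b : Fin n) :
    (tile d i j = .cross ∧ We d i j = some a ∧ So d i j = some b) ↔
      (CW w d a b (j + n - i) ∧ pos w d a (j + n - i) = i + j) := by
  have e : ((j + n - i : ℕ) : ℤ) - n = (j:ℤ) - i := by omega
  constructor
  · rintro ⟨h1, h2, h3⟩
    have p1 : (i + j : ℤ) = pos w d a (j + n - i) := by rw [← pos_iff hv hb, e, ff_W, HH_in, h2]
    have p2 : (i + j + 1 : ℤ) = pos w d b (j + n - i) := by rw [← pos_iff hv hb, e, ff_S, UU_in', h3]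
    have hE : Ea d i j = some a := by
      by_contra hE
      simp [tile, h2, h3, hE] at h1
    have hne : some a ≠ some b := by
      intro hne
      have := distinct hv hb i j (by rw [h2, h3, hne])
      simp [h2] at this
    have hN : No d i j = some b := by
      rcases hv i j with h | h <;> simp only [Prod.mk.injEq] at h
      · rw [h.2, h3]
      · rw [h.1, h3] at hE; exact absurd hE.symm hne
    refine ⟨⟨?_, by omega⟩, p1.symm⟩
    rw [← p1, e]
    refine ⟨by omega, ?_, ?_, ?_⟩
    · rw [ff_W, ff_E, HH_in, HH_in', hE, h2]
    · rw [ff_S, ff_N, UU_in, UU_in', hN, h3]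
    · rw [ff_W, ff_S, HH_in, UU_in', h2, h3]; exact hne
  · rintro ⟨⟨h1, h2⟩, h3⟩
    have a1 := (pos_iff hv hb a (j+n-i) _).2 rfl
    have b1 := (pos_iff hv hb b (j+n-i) _).2 rfl
    rw [h2, h3, e, ff_S, UU_in'] at b1
    rw [h3, e, ff_W, HH_in] at a1
    rw [h3, e] at h1
    have hE := h1.2.1
    rw [ff_E, ff_W, HH_in, HH_in', a1] at hE
    refine ⟨?_, a1, b1⟩
    simp [tile, a1, b1, hE]

theorem CW_tile (hv : WV d) (hb : BdW w d) {a b : Fin n} {m : ℕ} (h : CW w d a b m) :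
    ∃ i j : Fin n, m = j + n - i ∧ pos w d a m = i + j := by
  obtain ⟨h1, h2⟩ := h
  have hp := h1.1
  obtain ⟨i, j, ht, hk⟩ : ∃ i j : ℤ, (m - n : ℤ) = j - i ∧ pos w d a m = i + j :=
    ⟨(pos w d a m-(m-n))/2, (pos w d a m+(m-n))/2, by omega, by omega⟩
  by_cases hin : (0 ≤ i ∧ i < n ∧ 0 ≤ j ∧ j < n)
  · refine ⟨⟨i.toNat, by omega⟩, ⟨j.toNat, by omega⟩, ?_, ?_⟩
    · simp only; omega
    · rw [hk]; simp only; omega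
  · exfalso
    rw [ht, hk] at h1
    have o := out_turn hb i j hin
    have h3 := h1.2.1
    have h4 := h1.2.2.2
    rw [ff_E, ff_W] at h3
    rw [ff_W, ff_S] at h4
    rw [← h3, ← o.1] at h4
    exact h4 rfl

theorem ndc_iff (hv : WV d) (hb : BdW w d) : NoDoubleCross d ↔
    ∀ i j a b : Fin n, tile d i j = .cross → We d i j = some a → So d i j = some b → w b < w a := by
  constructor
  · intro hd i j a b h1 h2 h3
    have hab : a ≠ b := by
      rintro rfl
      have := distinct hv hb i j (by rw [h2, h3])
      simp [h2] at this
    obtain ⟨hc, hpos⟩ := (cross_iff hv hb i j a b).1 ⟨h1, h2, h3⟩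
    have noc : ∀ m, j + n - i < m → ¬ CW w d b a m := by
      intro m hm hc'
      obtain ⟨i', j', e1, e2⟩ := CW_tile hv hb hc'
      have := (cross_iff hv hb i' j' b a).2 ⟨e1 ▸ hc', e1 ▸ e2⟩
      have hcard := hd a b
      rw [crossCount, Finset.card_le_one] at hcard
      have := hcard (i, j) (Finset.mem_filter.2 ⟨Finset.mem_univ _, h1, Or.inl ⟨h2, h3⟩⟩) (i', j')
        (Finset.mem_filter.2 ⟨Finset.mem_univ _, this.1, Or.inr ⟨this.2.1, this.2.2⟩⟩)
      simp only [Prod.mk.injEq] at this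
      obtain ⟨rfl, rfl⟩ := this
      omega
    have hlt : ∀ m, j + n - i + 1 ≤ m → pos w d b m < pos w d a m := by
      intro m hm
      induction m, hm using Nat.le_induction with
      | base => exact CW_flip _ hc
      | succ m hm ih => exact lt_step hv hb hab.symm m ih (noc m (by omega))
    have := hlt (2*n) (by omega)
    rw [pos_end hv hb, pos_end hv hb] at this
    rw [Fin.lt_def]; omega
  · intro hl p q
    rw [crossCount, Finset.card_le_one]
    -- normalise
    have main : ∀ a b : Fin n, w b < w a → ∀ i j i' j' : Fin n, CrossesAt d a b i j →
        CrossesAt d a b i' j' → j + n - i < j' + n - i' → False := by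
      intro a b hw i j i' j' c c' hlt
      have hab : a ≠ b := by rintro rfl; exact lt_irrefl _ hw
      have ori : ∀ i j, CrossesAt d a b i j → tile d i j = .cross ∧ We d i j = some a ∧ So d i j = some b := by
        rintro i j ⟨h1, h2 | h2⟩
        · exact ⟨h1, h2⟩
        · exact absurd (hl i j b a h1 h2.1 h2.2) (not_lt.2 hw.le)
      obtain ⟨c1, -⟩ := (cross_iff hv hb i j a b).1 (ori _ _ c)
      obtain ⟨c2, -⟩ := (cross_iff hv hb i' j' a b).1 (ori _ _ c')
      have noc : ∀ m, ¬ CW w d b a m := by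
        intro m hc
        obtain ⟨i, j, e1, e2⟩ := CW_tile hv hb hc
        have := (cross_iff hv hb i j b a).2 ⟨e1 ▸ hc, e1 ▸ e2⟩
        exact absurd (hl i j b a this.1 this.2.1 this.2.2) (not_lt.2 hw.le)
      have hlt' : ∀ m, j + n - i + 1 ≤ m → pos w d b m < pos w d a m := by
        intro m hm
        induction m, hm using Nat.le_induction with
        | base => exact CW_flip _ c1
        | succ m hm ih => exact lt_step hv hb hab.symm m ih (noc m)
      have := hlt' _ (Nat.succ_le_of_lt hlt)
      have := c2.2
      omega
    have main2 : ∀ a b : Fin n, w b < w a → ∀ i j i' j' : Fin n, CrossesAt d a b i j →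
        CrossesAt d a b i' j' → (i, j) = (i', j') := by
      intro a b hw i j i' j' c c'
      rcases lt_trichotomy (j + n - i : ℕ) (j' + n - i') with h | h | h
      · exact (main a b hw _ _ _ _ c c' h).elim
      · have ori : ∀ i j, CrossesAt d a b i j → tile d i j = .cross ∧ We d i j = some a ∧ So d i j = some b := by
          rintro i j ⟨h1, h2 | h2⟩
          · exact ⟨h1, h2⟩
          · exact absurd (hl i j b a h1 h2.1 h2.2) (not_lt.2 hw.le)
        obtain ⟨c1, p1⟩ := (cross_iff hv hb i j a b).1 (ori _ _ c)
        obtain ⟨c2, p2⟩ := (cross_iff hv hb i' j' a b).1 (ori _ _ c')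
        rw [h, p2] at p1
        simp only [Prod.mk.injEq, Fin.ext_iff]
        omega
      · exact (main a b hw _ _ _ _ c' c h).elim
    have symm : ∀ i j, CrossesAt d p q i j → CrossesAt d q p i j := fun i j h => ⟨h.1, h.2.symm⟩
    rintro ⟨i, j⟩ hij ⟨i', j'⟩ hij'
    simp only [Finset.mem_filter, Finset.mem_univ, true_and] at hij hij'
    rcases lt_trichotomy (w p) (w q) with h | h | h
    · exact main2 q p h _ _ _ _ (symm _ _ hij) (symm _ _ hij')
    · exfalso
      have := w.injective h
      subst this
      have h2 := hij.2
      simp only [or_self] at h2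
      have := distinct hv hb i j (by rw [h2.1, h2.2])
      simp [h2.1] at this
    · exact main2 p q h _ _ _ _ hij hij'

end Topo

def tileF (W S E N : Option (Fin n)) : Tile :=
  match W, S with
  | some a, some _ => if E = some a then .cross else .bump
  | some _, none => if N = none then .horiz else .nw
  | none, some _ => if N = none then .se else .vert
  | none, none => .blank

theorem tile_eq (d : Pipes n) (i j : Fin n) :
    tile d i j = tileF (We d i j) (So d i j) (Ea d i j) (No d i j) := rfl

noncomputable def rl (w : Equiv.Perm (Fin n)) : Pipes n ≃ Pipes n :=
  Equiv.prodCongr ((Equiv.refl _).arrowCongr ((Equiv.refl _).arrowCongr w.optionCongr))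
    ((Equiv.refl _).arrowCongr ((Equiv.refl _).arrowCongr w.optionCongr))

theorem rl_We (w : Equiv.Perm (Fin n)) (d : Pipes n) (i j : Fin n) :
    We (rl w d) i j = (We d i j).map w := rfl
theorem rl_So (w : Equiv.Perm (Fin n)) (d : Pipes n) (i j : Fin n) :
    So (rl w d) i j = (So d i j).map w := rfl
theorem rl_Ea (w : Equiv.Perm (Fin n)) (d : Pipes n) (i j : Fin n) :
    Ea (rl w d) i j = (Ea d i j).map w := rfl
theorem rl_No (w : Equiv.Perm (Fin n)) (d : Pipes n) (i j : Fin n) :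
    No (rl w d) i j = (No d i j).map w := rfl

def lamW (w : Equiv.Perm (Fin n)) (i : ℕ) : Option (Fin n) :=
  if h : i < n then some (w ⟨i, h⟩) else none

theorem map_inj (w : Equiv.Perm (Fin n)) (a b : Option (Fin n)) : a.map w = b.map w ↔ a = b :=
  (Option.map_injective w.injective).eq_iff

theorem map_some_iff (w : Equiv.Perm (Fin n)) (a : Option (Fin n)) (b : Fin n) :
    a.map w = some (w b) ↔ a = some b := map_inj w a (some b)

theorem bdry_rl (w : Equiv.Perm (Fin n)) (d : Pipes n) : Bdry (lamW w) (rl w d) ↔ BdW w d := by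
  unfold Bdry BdW
  have h1 : ∀ i j, (rl w d).1 i j = (d.1 i j).map w := fun i j => rfl
  have h2 : ∀ i j, (rl w d).2 i j = (d.2 i j).map w := fun i j => rfl
  simp only [h1, h2]
  refine and_congr ?_ (and_congr ?_ (and_congr ?_ ?_))
  · refine forall_congr' fun i => ?_
    rw [lamW, dif_pos i.2]; exact map_some_iff w _ _
  · simp
  · simp
  · refine forall_congr' fun j => ?_
    rw [← map_some_iff w (d.2 0 j) (w.symm j), Equiv.apply_symm_apply]

theorem wt_bad (w : Equiv.Perm (Fin n)) (s t : Option (Fin n) → Option (Fin n) → R)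
    (W S E N : Option (Fin n)) (h : ¬ ((E, N) = (W, S) ∨ (E, N) = (S, W))) :
    wt s t (W.map w) (S.map w) (E.map w) (N.map w) = 0 := by
  simp only [wt, map_inj]
  simp only [Prod.mk.injEq, not_or] at h
  rw [if_neg h.1, if_neg h.2, add_zero]

theorem wB_ok (w : Equiv.Perm (Fin n)) (u : R) (W S E N : Option (Fin n))
    (h : (E, N) = (W, S) ∨ (E, N) = (S, W)) (hd : W = S → W = none)
    (h1 : tileF W S E N ≠ .bump)
    (h2 : ∀ a b, tileF W S E N = .cross → W = some a → S = some b → w b < w a) :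
    wt (sB u) tB (W.map w) (S.map w) (E.map w) (N.map w) =
      if tileF W S E N = .blank then u else 1 := by
  simp only [wt, map_inj]
  rcases W with - | a <;> rcases S with - | b <;> simp only [Prod.mk.injEq] at h
  · rcases h with ⟨rfl, rfl⟩ | ⟨rfl, rfl⟩ <;> simp [tileF, sB, tB]
  · rcases h with ⟨rfl, rfl⟩ | ⟨rfl, rfl⟩ <;> simp [tileF, sB, tB]
  · rcases h with ⟨rfl, rfl⟩ | ⟨rfl, rfl⟩ <;> simp [tileF, sB, tB]
  · have hab : a ≠ b := by rintro rfl; simpa using hd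
    rcases h with ⟨rfl, rfl⟩ | ⟨rfl, rfl⟩
    · have := h2 a b (by simp [tileF]) rfl rfl
      simp [tileF, sB, tB, this, hab]
    · simp [tileF, hab.symm] at h1

theorem wB_bump (w : Equiv.Perm (Fin n)) (u : R) (W S E N : Option (Fin n))
    (h1 : tileF W S E N = .bump) :
    wt (sB u) tB (W.map w) (S.map w) (E.map w) (N.map w) = 0 := by
  simp only [wt, map_inj]
  rcases W with - | a <;> rcases S with - | b <;> simp only [tileF] at h1
  · simp at h1
  · split_ifs at h1
  · split_ifs at h1
  · split_ifs at h1 with h2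
    simp [sB, tB, h2]

theorem wB_cross (w : Equiv.Perm (Fin n)) (u : R) (W S E N : Option (Fin n)) (a b : Fin n)
    (ha : W = some a) (hb : S = some b) (h2 : tileF W S E N = .cross) (h : ¬ w b < w a) :
    wt (sB u) tB (W.map w) (S.map w) (E.map w) (N.map w) = 0 := by
  subst ha hb
  simp [wt, sB, tB, h]

theorem prod_zero (f : Fin n → Fin n → R) (i j : Fin n) (h : f i j = 0) :
    ∏ i, ∏ j, f i j = 0 :=
  Finset.prod_eq_zero (Finset.mem_univ i) (Finset.prod_eq_zero (Finset.mem_univ j) h)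

theorem FB_eq (w : Equiv.Perm (Fin n)) (x y : ℕ → R) :
    (∑ d ∈ Finset.univ.filter (fun d : Pipes n => IsGPDof w d ∧ IsBumplessReduced d),
      ∏ p ∈ Finset.univ.filter (fun p : Fin n × Fin n => tile d p.1 p.2 = .blank),
        (x p.1 - y p.2)) = ZB (lamW w) x y := by
  rw [ZB, Z_eq, ← (rl w).sum_comp, Finset.sum_filter]
  refine Finset.sum_congr rfl fun d _ => ?_
  simp only [bdry_rl, rl_We, rl_So, rl_Ea, rl_No]
  by_cases hb : BdW w d
  swap
  · rw [if_neg hb, if_neg (fun h => hb h.1.2)]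
  rw [if_pos hb]
  by_cases hv : WV d
  swap
  · rw [if_neg]
    · simp only [WV, not_forall] at hv
      obtain ⟨i, j, h⟩ := hv
      exact (prod_zero _ i j (wt_bad w _ _ _ _ _ _ h)).symm
    · exact fun h => hv fun i j => (h.1.1 i j).1
  have hval : IsGPDof w d := ⟨fun i j => ⟨hv i j, distinct hv hb i j⟩, hb⟩
  by_cases h1 : ∀ i j, tile d i j ≠ .bump
  swap
  · rw [if_neg (fun h => h1 h.2.1)]
    push Not at h1
    obtain ⟨i, j, h⟩ := h1
    exact (prod_zero _ i j (wB_bump w _ _ _ _ _ h)).symm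
  by_cases h2 : NoDoubleCross d
  swap
  · rw [if_neg (fun h => h2 h.2.2)]
    rw [ndc_iff hv hb] at h2
    push Not at h2
    obtain ⟨i, j, a, b, h3, h4, h5, h6⟩ := h2
    exact (prod_zero _ i j (wB_cross w _ _ _ _ _ a b h4 h5 h3 (not_lt.2 h6))).symm
  rw [if_pos ⟨hval, h1, h2⟩, Finset.prod_filter, Fintype.prod_prod_type]
  rw [ndc_iff hv hb] at h2
  refine Finset.prod_congr rfl fun i _ => Finset.prod_congr rfl fun j _ => ?_
  rw [wB_ok w _ _ _ _ _ (hv i j) (distinct hv hb i j) (h1 i j) (h2 i j)]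
  rfl

def regOK (n i j : ℕ) (T : Tile) : Prop :=
  (i + j + 2 ≤ n → T = .cross ∨ T = .bump) ∧
  (i + j + 2 = n + 1 → T = .nw) ∧ (i + j + 2 > n + 1 → T = .blank)

theorem wP_ok (w : Equiv.Perm (Fin n)) (u : R) (i j : ℕ) (W S E N : Option (Fin n))
    (h : (E, N) = (W, S) ∨ (E, N) = (S, W)) (hd : W = S → W = none)
    (h1 : regOK n i j (tileF W S E N))
    (h2 : ∀ a b, tileF W S E N = .cross → W = some a → S = some b → w b < w a) :
    wt (sPP i j u) (tPP i j) (W.map w) (S.map w) (E.map w) (N.map w) =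
      if tileF W S E N = .cross then u else 1 := by
  simp only [wt, map_inj]
  obtain ⟨c1, c2, c3⟩ := h1
  rcases lt_trichotomy (i+j+2) (n+1) with hr | hr | hr
  · have hr' : i + j + 2 ≤ n := by omega
    have c := c1 hr'
    simp only [sPP, tPP, if_pos hr']
    rcases W with - | a <;> rcases S with - | b <;> simp only [Prod.mk.injEq] at h
    · simp [tileF] at c
    · simp only [tileF] at c; split_ifs at c <;> simp at c
    · simp only [tileF] at c; split_ifs at c <;> simp at c
    · have hab : a ≠ b := by rintro rfl; simpa using hd
      rcases h with ⟨rfl, rfl⟩ | ⟨rfl, rfl⟩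
      · have := h2 a b (by simp [tileF]) rfl rfl
        simp [tileF, sP, tP, this, hab]
      · simp [tileF, sP, tP, hab, hab.symm]
  · have c := c2 hr
    simp only [sPP, tPP, if_neg (show ¬ (i + j + 2 ≤ n) by omega), if_pos hr]
    rw [c]
    rcases W with - | a <;> rcases S with - | b <;> simp only [Prod.mk.injEq] at h
    · simp [tileF] at c
    · simp only [tileF] at c; split_ifs at c
    · rcases h with ⟨rfl, rfl⟩ | ⟨rfl, rfl⟩
      · simp [tileF] at c
      · simp
    · simp only [tileF] at c; split_ifs at c
  · have c := c3 hr
    simp only [sPP, tPP, if_neg (show ¬ (i + j + 2 ≤ n) by omega), if_neg (show ¬ (i + j + 2 = n + 1) by omega)]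
    rw [c]
    rcases W with - | a <;> rcases S with - | b <;> simp only [Prod.mk.injEq] at h
    · rcases h with ⟨rfl, rfl⟩ | ⟨rfl, rfl⟩ <;> simp
    all_goals simp only [tileF] at c; split_ifs at c

theorem wP_reg (w : Equiv.Perm (Fin n)) (u : R) (i j : ℕ) (W S E N : Option (Fin n))
    (h1 : ¬ regOK n i j (tileF W S E N)) :
    wt (sPP i j u) (tPP i j) (W.map w) (S.map w) (E.map w) (N.map w) = 0 := by
  simp only [wt, map_inj]
  rcases lt_trichotomy (i+j+2) (n+1) with hr | hr | hr
  · have hr' : i + j + 2 ≤ n := by omega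
    have c : ¬ (tileF W S E N = .cross ∨ tileF W S E N = .bump) := fun c =>
      h1 ⟨fun _ => c, fun h => by omega, fun h => by omega⟩
    simp only [sPP, tPP, if_pos hr']
    rcases W with - | a <;> rcases S with - | b
    · simp [sP, tP]
    · simp [sP, tP]
    · simp [sP, tP]
    · exfalso; apply c; simp only [tileF]; split_ifs <;> simp
  · have c : ¬ (tileF W S E N = .nw) := fun c =>
      h1 ⟨fun h => by omega, fun _ => c, fun h => by omega⟩
    simp only [sPP, tPP, if_neg (show ¬ (i + j + 2 ≤ n) by omega), if_pos hr]
    rcases W with - | a <;> rcases S with - | b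
    · simp
    · simp
    · have : ¬ (E = none ∧ N = some a) := by rintro ⟨rfl, rfl⟩; simp [tileF] at c
      simp only [if_neg this]; simp
    · simp
  · have c : ¬ (tileF W S E N = .blank) := fun c =>
      h1 ⟨fun h => by omega, fun h => by omega, fun _ => c⟩
    simp only [sPP, tPP, if_neg (show ¬ (i + j + 2 ≤ n) by omega), if_neg (show ¬ (i + j + 2 = n + 1) by omega)]
    rcases W with - | a <;> rcases S with - | b
    · simp [tileF] at c
    all_goals simp

theorem wP_cross (w : Equiv.Perm (Fin n)) (u : R) (i j : ℕ) (W S E N : Option (Fin n)) (a b : Fin n)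
    (ha : W = some a) (hb : S = some b) (h2 : tileF W S E N = .cross) (h : ¬ w b < w a)
    (hd : W = S → W = none) :
    wt (sPP i j u) (tPP i j) (W.map w) (S.map w) (E.map w) (N.map w) = 0 := by
  subst ha hb
  have hab : a ≠ b := by rintro rfl; simpa using hd
  have hE : E = some a := by
    by_contra hE; simp [tileF, hE] at h2
  subst hE
  simp only [wt, map_inj]
  rw [if_neg (c := some a = some b ∧ N = some a) (by simp [hab]), add_zero]
  unfold sPP
  split_ifs <;> simp [sP, h]

theorem FP_eq (w : Equiv.Perm (Fin n)) (x y : ℕ → R) :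
    (∑ d ∈ Finset.univ.filter (fun d : Pipes n => IsGPDof w d ∧ IsClassic d),
      ∏ p ∈ Finset.univ.filter (fun p : Fin n × Fin n => tile d p.1 p.2 = .cross),
        (x p.1 - y p.2)) = ZP (lamW w) x y := by
  rw [ZP, Z_eq, ← (rl w).sum_comp, Finset.sum_filter]
  refine Finset.sum_congr rfl fun d _ => ?_
  simp only [bdry_rl, rl_We, rl_So, rl_Ea, rl_No]
  by_cases hb : BdW w d
  swap
  · rw [if_neg hb, if_neg (fun h => hb h.1.2)]
  rw [if_pos hb]
  by_cases hv : WV d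
  swap
  · rw [if_neg]
    · simp only [WV, not_forall] at hv
      obtain ⟨i, j, h⟩ := hv
      exact (prod_zero _ i j (wt_bad w _ _ _ _ _ _ h)).symm
    · exact fun h => hv fun i j => (h.1.1 i j).1
  have hval : IsGPDof w d := ⟨fun i j => ⟨hv i j, distinct hv hb i j⟩, hb⟩
  by_cases h1 : ∀ i j : Fin n, regOK n i j (tile d i j)
  swap
  · rw [if_neg (fun h => h1 fun i j => ⟨h.2.1 i j, h.2.2.1 i j, h.2.2.2.1 i j⟩)]
    simp only [not_forall] at h1
    obtain ⟨i, j, h⟩ := h1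
    exact (prod_zero _ i j (wP_reg w _ _ _ _ _ _ _ h)).symm
  by_cases h2 : NoDoubleCross d
  swap
  · rw [if_neg (fun h => h2 h.2.2.2.2)]
    rw [ndc_iff hv hb] at h2
    push Not at h2
    obtain ⟨i, j, a, b, h3, h4, h5, h6⟩ := h2
    exact (prod_zero _ i j (wP_cross w _ _ _ _ _ _ _ a b h4 h5 h3 (not_lt.2 h6) (distinct hv hb i j))).symm
  rw [if_pos ⟨hval, fun i j => (h1 i j).1, fun i j => (h1 i j).2.1, fun i j => (h1 i j).2.2, h2⟩,
    Finset.prod_filter, Fintype.prod_prod_type]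
  rw [ndc_iff hv hb] at h2
  refine Finset.prod_congr rfl fun i _ => Finset.prod_congr rfl fun j _ => ?_
  rw [wP_ok w _ _ _ _ _ _ _ (hv i j) (distinct hv hb i j) (h1 i j) (h2 i j)]
  rfl

noncomputable def d0 (n : ℕ) : Pipes n :=
  (fun i j => if (j : ℕ) + i < n then some i else none,
   fun i j => if (j : ℕ) + i < n then some j.rev else none)

theorem d0_We (i j : Fin n) : We (d0 n) i j = if (j : ℕ) + i < n then some i else none := rfl
theorem d0_Ea (i j : Fin n) : Ea (d0 n) i j = if (j : ℕ) + 1 + i < n then some i else none := rfl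
theorem d0_No (i j : Fin n) : No (d0 n) i j = if (j : ℕ) + i < n then some j.rev else none := rfl
theorem d0_So (i j : Fin n) : So (d0 n) i j = if (j : ℕ) + (i + 1) < n then some j.rev else none := rfl

theorem row_unique (d : Pipes n) (hv : IsValid d) (i : Fin n) (h0 : d.1 i 0 = some i)
    (h1 : d.1 i (Fin.last n) = none)
    (hN : ∀ j : Fin n, d.2 i.castSucc j = if (j : ℕ) + i < n then some j.rev else none) :
    (∀ j : Fin (n+1), d.1 i j = if (j : ℕ) + i < n then some i else none) ∧
    (∀ j : Fin n, d.2 i.succ j = if (j : ℕ) + (i + 1) < n then some j.rev else none) := by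
  have hv' : ∀ j : Fin n, (d.1 i j.succ = d.1 i j.castSucc ∧ d.2 i.castSucc j = d.2 i.succ j) ∨
      (d.1 i j.succ = d.2 i.succ j ∧ d.2 i.castSucc j = d.1 i j.castSucc) := fun j => by
    simpa [Ea, No, We, So] using (hv i j).1
  have hl : ∀ m : ℕ, ∀ hm : m + i < n, d.1 i ⟨m, by omega⟩ = some i := by
    intro m
    induction m with
    | zero => intro _; exact h0
    | succ m ih =>
      intro hm
      have e := ih (by omega)
      have hN' := hN ⟨m, by omega⟩
      rw [if_pos (by simp only; omega)] at hN'
      rcases hv' ⟨m, by omega⟩ with ⟨h2, h3⟩ | ⟨h2, h3⟩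
      · exact h2.trans e
      · have h4 := hN'.symm.trans (h3.trans e)
        rw [Option.some.injEq, Fin.ext_iff, Fin.val_rev] at h4
        simp only at h4
        omega
  have hr : ∀ k : ℕ, k ≤ i → d.1 i ⟨n - k, by omega⟩ = none := by
    intro k
    induction k with
    | zero => intro _; exact h1
    | succ k ih =>
      intro hk
      have e := ih (by omega)
      have hN' := hN ⟨n - (k+1), by omega⟩
      rw [if_neg (by simp only; omega)] at hN'
      have e' : d.1 i (Fin.succ ⟨n - (k+1), by omega⟩) = none := by
        rw [← e]; exact congrArg (d.1 i) (Fin.ext (by simp only [Fin.val_succ]; omega))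
      rcases hv' ⟨n - (k+1), by omega⟩ with ⟨h2, h3⟩ | ⟨h2, h3⟩
      · exact h2.symm.trans e'
      · exact h3.symm.trans hN'
  have hA : ∀ j : Fin (n+1), d.1 i j = if (j : ℕ) + i < n then some i else none := by
    intro j
    split_ifs with h
    · exact hl j h
    · rw [← hr (n - j) (by omega)]; exact congrArg (d.1 i) (Fin.ext (by simp only; omega))
  refine ⟨hA, fun j => ?_⟩
  have a1 := hA j.castSucc
  have a2 := hA j.succ
  have a3 := hN j
  simp only [Fin.val_castSucc, Fin.val_succ] at a1 a2
  rcases hv' j with ⟨h2, h3⟩ | ⟨h2, h3⟩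
  · rw [← h3, a3]
    by_cases h : (j:ℕ) + i < n
    · by_cases h' : (j:ℕ) + (i + 1) < n
      · rw [if_pos h, if_pos h']
      · rw [a1, a2, if_pos h, if_neg (by omega)] at h2; simp at h2
    · rw [if_neg h, if_neg (by omega)]
  · rw [← h2, a2]
    by_cases h' : (j:ℕ) + (i + 1) < n
    · rw [a1, a3, if_pos (by omega), if_pos (by omega), Option.some.injEq, Fin.ext_iff, Fin.val_rev] at h3
      omega
    · rw [if_neg h', if_neg (by omega)]

theorem d0_unique (d : Pipes n) (h : IsGPDof Fin.revPerm d) : d = d0 n := by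
  obtain ⟨hv, h1, h2, h3, h4⟩ := h
  have key : ∀ m : ℕ, ∀ hm : m < n + 1, ∀ j : Fin n,
      d.2 ⟨m, hm⟩ j = if (j : ℕ) + m < n then some j.rev else none := by
    intro m
    induction m with
    | zero =>
      intro _ j
      rw [if_pos (by omega)]
      exact h4 j
    | succ m ih =>
      intro hm j
      exact (row_unique d hv ⟨m, by omega⟩ (h1 _) (h2 _) (ih (by omega))).2 j
  refine Prod.ext ?_ ?_
  · funext i j
    exact (row_unique d hv i (h1 _) (h2 _) (key i (by omega))).1 j
  · funext i j
    exact key i i.2 j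

theorem d0_tile (i j : Fin n) : tile (d0 n) i j =
    if (i : ℕ) + j + 2 ≤ n then .cross else if (i : ℕ) + j + 2 = n + 1 then .nw else .blank := by
  rw [tile_eq, d0_We, d0_So, d0_Ea, d0_No]
  split_ifs <;> first | omega | simp [tileF]

theorem d0_gpd : IsGPDof Fin.revPerm (d0 n) := by
  refine ⟨fun i j => ⟨?_, ?_⟩, fun i => ?_, fun i => ?_, fun j => ?_, fun j => ?_⟩
  · rw [d0_We, d0_So, d0_Ea, d0_No]
    by_cases h : (i : ℕ) + j + 2 ≤ n
    · left
      rw [if_pos (by omega), if_pos (by omega), if_pos (by omega), if_pos (by omega)]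
    · by_cases h' : (i : ℕ) + j + 2 = n + 1
      · right
        rw [if_neg (by omega), if_pos (by omega), if_neg (by omega), if_pos (by omega)]
        rw [Prod.mk.injEq, Option.some.injEq, Fin.ext_iff, Fin.val_rev]
        exact ⟨rfl, by omega⟩
      · left
        rw [if_neg (by omega), if_neg (by omega), if_neg (by omega), if_neg (by omega)]
  · rw [d0_We, d0_So]
    split_ifs with h h'
    · intro e
      rw [Option.some.injEq, Fin.ext_iff, Fin.val_rev] at e
      omega
    all_goals simp
  · simp [d0]
  · simp [d0]
  · simp [d0]
  · simp [d0]

theorem d0_ndc : NoDoubleCross (d0 n) := by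
  have hg := d0_gpd (n := n)
  rw [ndc_iff (fun i j => (hg.1 i j).1) hg.2]
  intro i j a b h1 h2 h3
  rw [d0_We] at h2
  rw [d0_So] at h3
  split_ifs at h2 h3 with h4 h5
  obtain rfl := Option.some.inj h2
  obtain rfl := Option.some.inj h3
  simp only [Fin.revPerm_apply, Fin.rev_rev, Fin.lt_def, Fin.val_rev]
  omega

def rv (n : ℕ) (f : ℕ → R) (i : ℕ) : R := if i < n then f (n - 1 - i) else 0

theorem base_case (x y : ℕ → R) :
    ZB (lamW (Fin.revPerm : Equiv.Perm (Fin n))) x y = ZP (lamW (Fin.revPerm : Equiv.Perm (Fin n))) (rv n x) (rv n y) := by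
  rw [← FB_eq, ← FP_eq]
  have e1 : Finset.univ.filter (fun d : Pipes n => IsGPDof Fin.revPerm d ∧ IsBumplessReduced d) = {d0 n} := by
    ext d
    simp only [Finset.mem_filter, Finset.mem_univ, true_and, Finset.mem_singleton]
    constructor
    · exact fun h => d0_unique d h.1
    · rintro rfl
      refine ⟨d0_gpd, fun i j => ?_, d0_ndc⟩
      rw [d0_tile]; split_ifs <;> simp
  have e2 : Finset.univ.filter (fun d : Pipes n => IsGPDof Fin.revPerm d ∧ IsClassic d) = {d0 n} := by
    ext d
    simp only [Finset.mem_filter, Finset.mem_univ, true_and, Finset.mem_singleton]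
    constructor
    · exact fun h => d0_unique d h.1
    · rintro rfl
      refine ⟨d0_gpd, fun i j h => ?_, fun i j h => ?_, fun i j h => ?_, d0_ndc⟩
      · rw [d0_tile, if_pos h]; simp
      · rw [d0_tile, if_neg (by omega), if_pos h]
      · rw [d0_tile, if_neg (by omega), if_neg (by omega)]
  rw [e1, e2, Finset.sum_singleton, Finset.sum_singleton, Finset.prod_filter, Finset.prod_filter]
  rw [← (Equiv.prodCongr (Fin.revPerm : Equiv.Perm (Fin n)) (Fin.revPerm : Equiv.Perm (Fin n))).prod_comp]
  refine Finset.prod_congr rfl fun p _ => ?_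
  obtain ⟨i, j⟩ := p
  simp only [Equiv.prodCongr_apply, Prod.map_apply, Fin.revPerm_apply, d0_tile, Fin.val_rev]
  have hx : rv n x i = x (n - (i + 1)) := by rw [rv, if_pos i.2]; congr 1; omega
  have hy : rv n y j = y (n - (j + 1)) := by rw [rv, if_pos j.2]; congr 1; omega
  rw [hx, hy]
  by_cases h : (i : ℕ) + j + 2 ≤ n
  · have h1 : ¬ (n - (↑i + 1) + (n - (↑j + 1)) + 2 ≤ n) := by omega
    have h2 : ¬ (n - (↑i + 1) + (n - (↑j + 1)) + 2 = n + 1) := by omega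
    simp only [if_pos h, if_neg h1, if_neg h2, if_true]
  · have : ((if n - (↑i + 1) + (n - (↑j + 1)) + 2 ≤ n then Tile.cross else
        if n - (↑i + 1) + (n - (↑j + 1)) + 2 = n + 1 then Tile.nw else Tile.blank) = Tile.blank) ↔ False := by
      rw [iff_false]
      have : n - (↑i + 1) + (n - (↑j + 1)) + 2 ≤ n + 1 := by omega
      split_ifs <;> first | omega | simp
    simp only [this, if_neg h, if_false]
    split_ifs <;> simp_all

theorem lamW_val (w : Equiv.Perm (Fin n)) (i : Fin n) : lamW w i = some (w i) := dif_pos i.2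

theorem lamW_swap (w : Equiv.Perm (Fin n)) (r : ℕ) (hr : r + 1 < n) :
    lamW (w * Equiv.swap ⟨r, by omega⟩ ⟨r+1, hr⟩) ∘ Equiv.swap r (r+1) = lamW w := by
  funext i
  by_cases hi : i < n
  · obtain ⟨i, rfl⟩ : ∃ i' : Fin n, i = i' := ⟨⟨i, hi⟩, rfl⟩
    have : Equiv.swap r (r+1) (i : ℕ) = ((Equiv.swap (⟨r, by omega⟩ : Fin n) ⟨r+1, hr⟩ i : Fin n) : ℕ) := by
      simp only [Equiv.swap_apply_def, Fin.ext_iff]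
      split_ifs <;> rfl
    rw [Function.comp, this, lamW_val, lamW_val]
    simp
  · rw [Function.comp, swap_off (by omega) (by omega)]
    simp [lamW, hi]

theorem gtI_swap (w : Equiv.Perm (Fin n)) (r : ℕ) (hr : r + 1 < n) (h : w ⟨r, by omega⟩ < w ⟨r+1, hr⟩) :
    gtI R (lamW (w * Equiv.swap ⟨r, by omega⟩ ⟨r+1, hr⟩) r)
      (lamW (w * Equiv.swap ⟨r, by omega⟩ ⟨r+1, hr⟩) (r+1)) = 1 := by
  rw [lamW, lamW, dif_pos (by omega), dif_pos hr]
  simp [gtI, h]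

theorem meas_lt (w : Equiv.Perm (Fin n)) (r : ℕ) (hr : r + 1 < n) (h : w ⟨r, by omega⟩ < w ⟨r+1, hr⟩) :
    ∑ i : Fin n, (i : ℕ) * ((w * Equiv.swap (⟨r, by omega⟩ : Fin n) ⟨r+1, hr⟩ : Equiv.Perm (Fin n)) i : ℕ) < ∑ i : Fin n, (i : ℕ) * (w i : ℕ) := by
  have hr0 : r < n := by omega
  set a : Fin n := ⟨r, hr0⟩ with ha
  set b : Fin n := ⟨r+1, hr⟩ with hb
  have hab : a ≠ b := by simp [ha, hb]
  rw [← Equiv.sum_comp (Equiv.swap a b) (fun i : Fin n => (i : ℕ) * ((w * Equiv.swap a b : Equiv.Perm (Fin n)) i : ℕ))]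
  simp only [Equiv.Perm.mul_apply, Equiv.swap_apply_self]
  zify
  rw [← sub_pos, ← Finset.sum_sub_distrib, Fintype.sum_eq_add a b hab]
  · rw [Equiv.swap_apply_left, Equiv.swap_apply_right]
    have : (a : ℤ) = r := rfl
    have h2 : ((b : ℕ) : ℤ) = r + 1 := by simp [hb]
    have h3 : ((w a : ℕ) : ℤ) < (w b : ℕ) := by exact_mod_cast h
    rw [this, h2]; nlinarith
  · rintro i ⟨h1, h2⟩
    rw [Equiv.swap_apply_of_ne_of_ne h1 h2, sub_self]

theorem no_ascent (w : Equiv.Perm (Fin n))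
    (h : ∀ r (hr : r + 1 < n), w ⟨r+1, hr⟩ < w ⟨r, by omega⟩) : w = Fin.revPerm := by
  have h1 : ∀ k i (hi : i + k + 1 < n), w ⟨i + k + 1, hi⟩ < w ⟨i, by omega⟩ := by
    intro k
    induction k with
    | zero => intro i hi; exact h i hi
    | succ k ih => intro i hi; exact (h _ hi).trans (ih i (by omega))
  have h2 : StrictMono (fun i => (w i).rev) := by
    intro i j hij
    rw [Fin.rev_lt_rev]
    have := h1 (j - i - 1) i (by omega)
    convert this using 2
    rw [Fin.ext_iff]; simp only; omega
  have h3 : (fun i => (w i).rev) = id := by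
    refine (StrictMono.range_inj h2 strictMono_id).1 ?_
    rw [Set.range_id, Set.range_eq_univ]
    exact (Fin.revPerm.surjective).comp w.surjective
  ext i
  have := congrFun h3 i
  simp only [id] at this
  rw [Fin.revPerm_apply, ← Fin.rev_eq_iff.1 this]

theorem main_id [IsDomain R] (y : ℕ → R) (N : ℕ) : ∀ (w : Equiv.Perm (Fin n)),
    ∑ i : Fin n, (i : ℕ) * (w i : ℕ) = N → ∀ x : ℕ → R, (∀ i j, i < n → j < n → x i = x j → i = j) →
    ZB (lamW w) x y = ZP (lamW (Fin.revPerm * w * Fin.revPerm)) (rv n x) (rv n y) := by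
  induction N using Nat.strong_induction_on with
  | _ N ih =>
  intro w hN x hx
  by_cases hasc : ∃ r, ∃ hr : r + 1 < n, w ⟨r, by omega⟩ < w ⟨r+1, hr⟩
  swap
  · have hw : w = Fin.revPerm := by
      apply no_ascent
      intro r hr
      have : ¬ (w ⟨r, by omega⟩ < w ⟨r+1, hr⟩) := fun h => hasc ⟨r, hr, h⟩
      refine lt_of_le_of_ne (not_lt.1 this) fun e => ?_
      have := w.injective e
      simp at this
    subst hw
    have : (Fin.revPerm * Fin.revPerm * Fin.revPerm : Equiv.Perm (Fin n)) = Fin.revPerm := by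
      ext i; simp
    rw [this]
    exact base_case x y
  obtain ⟨r, hr, hlt⟩ := hasc
  have hr0 : r < n := by omega
  set w' := w * Equiv.swap ⟨r, hr0⟩ ⟨r+1, hr⟩ with hw'
  have hm : ∑ i : Fin n, (i : ℕ) * (w' i : ℕ) < N := hN ▸ meas_lt w r hr hlt
  have I1 := ih _ hm w' rfl x hx
  have I2 := ih _ hm w' rfl (x ∘ Equiv.swap r (r+1)) (by
    intro i j hi hj h
    have hs : ∀ i, i < n → Equiv.swap r (r+1) i < n := by
      intro i hi
      rw [Equiv.swap_apply_def]; split_ifs <;> omega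
    exact (Equiv.swap r (r+1)).injective (hx _ _ (hs i hi) (hs j hj) h))
  have B := ZB_rel (lamW w') x y r hr
  rw [hw', lamW_swap, gtI_swap w r hr hlt, ← hw', one_mul] at B
  -- the classic side
  set v := Fin.revPerm * w * Fin.revPerm with hv
  obtain ⟨q, hq⟩ : ∃ q, q + r + 2 = n := ⟨n - r - 2, by omega⟩
  have hq1 : q + 1 < n := by omega
  have hq0 : q < n := by omega
  have ev : Fin.revPerm * w' * Fin.revPerm = v * Equiv.swap ⟨q, hq0⟩ ⟨q+1, hq1⟩ := by
    have a1 : (Fin.rev ⟨q, hq0⟩ : Fin n) = ⟨r+1, hr⟩ := by rw [Fin.ext_iff, Fin.val_rev]; simp only; omega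
    have a2 : (Fin.rev ⟨q+1, hq1⟩ : Fin n) = ⟨r, hr0⟩ := by rw [Fin.ext_iff, Fin.val_rev]; simp only; omega
    have : Equiv.swap (⟨r, hr0⟩ : Fin n) ⟨r+1, hr⟩ * Fin.revPerm = Fin.revPerm * Equiv.swap ⟨q, hq0⟩ ⟨q+1, hq1⟩ := by
      rw [Equiv.mul_swap_eq_swap_mul, Fin.revPerm_apply, Fin.revPerm_apply, a1, a2, Equiv.swap_comm]
    rw [hw', hv, mul_assoc, mul_assoc, this]; simp only [mul_assoc]
  have hlt' : v ⟨q, hq0⟩ < v ⟨q+1, hq1⟩ := by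
    have a1 : (Fin.rev ⟨q, hq0⟩ : Fin n) = ⟨r+1, hr⟩ := by rw [Fin.ext_iff, Fin.val_rev]; simp only; omega
    have a2 : (Fin.rev ⟨q+1, hq1⟩ : Fin n) = ⟨r, hr0⟩ := by rw [Fin.ext_iff, Fin.val_rev]; simp only; omega
    simp only [hv, Equiv.Perm.mul_apply, Fin.revPerm_apply, a1, a2, Fin.rev_lt_rev]
    exact hlt
  have P := ZP_rel (lamW (v * Equiv.swap ⟨q, hq0⟩ ⟨q+1, hq1⟩)) (rv n x) (rv n y) q hq1
  rw [lamW_swap, gtI_swap v q hq1 hlt', one_mul] at P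
  have erv : rv n (x ∘ Equiv.swap r (r+1)) = rv n x ∘ Equiv.swap q (q+1) := by
    funext i
    by_cases h1 : i = q
    · subst h1
      rw [Function.comp, Equiv.swap_apply_left, rv, rv, if_pos hq0, if_pos hq1, Function.comp,
        show n - 1 - i = r + 1 by omega, Equiv.swap_apply_right]
      congr 1; omega
    · by_cases h2 : i = q + 1
      · subst h2
        rw [Function.comp, Equiv.swap_apply_right, rv, rv, if_pos hq0, if_pos hq1, Function.comp,
          show n - 1 - (q+1) = r by omega, Equiv.swap_apply_left]
        congr 1; omega
      · rw [Function.comp, swap_off h1 h2, rv, rv]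
        by_cases hi : i < n
        · rw [if_pos hi, if_pos hi, Function.comp, swap_off (by omega) (by omega)]
        · rw [if_neg hi, if_neg hi]
  rw [ev] at I1 I2
  rw [erv] at I2
  rw [← I1, ← I2, B] at P
  have c1 : rv n x (q+1) = x r := by rw [rv, if_pos hq1]; congr 1; omega
  have c2 : rv n x q = x (r+1) := by rw [rv, if_pos hq0]; congr 1; omega
  rw [c1, c2] at P
  have hne : x r - x (r+1) ≠ 0 := by
    rw [sub_ne_zero]; intro h
    have := hx _ _ hr0 hr h
    omega
  exact mul_left_cancel₀ hne (add_left_cancel P)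

end Model

theorem statement4 {n : ℕ} (hn : 1 ≤ n) (w : Equiv.Perm (Fin n)) :
    (∑ d ∈ Finset.univ.filter (fun d : Pipes n => IsGPDof w d ∧ IsBumplessReduced d),
      ∏ p ∈ Finset.univ.filter (fun p : Fin n × Fin n => tile d p.1 p.2 = .blank),
        (MvPolynomial.X (XY.x p.1) - MvPolynomial.X (XY.y p.2) : MvPolynomial (XY n) ℤ)) =
    ∑ g ∈ Finset.univ.filter
        (fun g : Pipes n => IsGPDof (Fin.revPerm * w * Fin.revPerm) g ∧ IsClassic g),
      ∏ p ∈ Finset.univ.filter (fun p : Fin n × Fin n => tile g p.1 p.2 = .cross),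
        (MvPolynomial.X (XY.x p.1.rev) - MvPolynomial.X (XY.y p.2.rev)) := by
  let x : ℕ → MvPolynomial (XY n) ℤ := fun i => if h : i < n then MvPolynomial.X (XY.x ⟨i, h⟩) else 0
  let y : ℕ → MvPolynomial (XY n) ℤ := fun i => if h : i < n then MvPolynomial.X (XY.y ⟨i, h⟩) else 0
  have hx : ∀ i : Fin n, x i = MvPolynomial.X (XY.x i) := fun i => dif_pos i.2
  have hy : ∀ i : Fin n, y i = MvPolynomial.X (XY.y i) := fun i => dif_pos i.2
  have hx' : ∀ i : Fin n, rv n x i = MvPolynomial.X (XY.x i.rev) := fun i => by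
    rw [rv, if_pos i.2, ← hx, Fin.val_rev]; congr 1; omega
  have hy' : ∀ i : Fin n, rv n y i = MvPolynomial.X (XY.y i.rev) := fun i => by
    rw [rv, if_pos i.2, ← hy, Fin.val_rev]; congr 1; omega
  have key := main_id (n := n) y _ w rfl x (by
    intro i j hi hj h
    have h' : x ((⟨i, hi⟩ : Fin n) : ℕ) = x ((⟨j, hj⟩ : Fin n) : ℕ) := h
    rw [hx, hx] at h'
    have := MvPolynomial.X_injective h'
    injection this with h1
    exact Fin.ext_iff.1 h1)
  rw [← FB_eq, ← FP_eq] at key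
  simp only [hx, hy, hx', hy'] at key
  exact key

end GPDpaper
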